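/- arXiv:2412.04328 — 2 statements merged into one kernel-verified Lean document; each statement's English description precedes it below -/
import Mathlib

section
/- For ε > 0, let β(ε) denote the unique β > e^{−1} with 1 − β − (1/(2e))·(log β)² = 1 − 3/(2e) − ε; set z(β) = e·β + log β and 𝒮(β) = β·(z(β) + z(β)·exp(−z(β)) + 2·exp(−z(β)) − 2). Then 𝒮(β(ε)) = (4·e^{1/2}/3)·ε^{3/2} + O(ε²) as ε → 0+. -/
open Real Filter Set Topology Asymptotics

noncomputable def zOf (β : ℝ) : ℝ := Real.exp 1 * β + Real.log β

noncomputable def SFluid (β : ℝ) : ℝ :=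
  β * (zOf β + zOf β * Real.exp (-(zOf β)) + 2 * Real.exp (-(zOf β)) - 2)

/-!
Put `β = exp (u - 1)`, so that `β ↓ e⁻¹` becomes `u ↓ 0`. The time left before extinction is then
`e⁻¹ (exp u - 1 - u + u² / 2) = e⁻¹ u² + O(u³)`, since the linear terms cancel. On the other side
`z = exp u + u - 1 = 2 u + O(u²)`, and the bracket in the surplus vanishes to third order,
`z + z exp (-z) + 2 exp (-z) - 2 = z³ / 6 + O(z⁴)`, so the surplus is `4 u³ / (3 e) + O(u⁴)`.
Eliminating `u` between the two expansions gives the exponent `3 / 2` and the constant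
`4 e^{1/2} / 3`. Since `exp u ≥ 1 + u`, the time left is at least `u² / (2 e)`, so it does force
`u → 0`.
-/

section

variable {α : Type*} {l : Filter α}

lemma isBigO_pow_sub_pow {R 𝕜 : Type*} [SeminormedCommRing R] [NormedField 𝕜] {f g : α → R}
    {r k : α → 𝕜} (hf : f =O[l] k) (hg : g =O[l] k)
    (hfg : (fun x ↦ f x - g x) =O[l] fun x ↦ r x * k x) (n : ℕ) :
    (fun x ↦ f x ^ n - g x ^ n) =O[l] fun x ↦ r x * k x ^ n := by
  induction n with
  | zero => simpa only [pow_zero, sub_self] using isBigO_zero (fun x ↦ r x * 1) l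
  | succ n ih =>
    have hleft : (fun x ↦ f x ^ n * (f x - g x)) =O[l] fun x ↦ r x * k x ^ (n + 1) :=
      ((hf.pow n).mul hfg).congr_right fun x ↦ by ring
    have hright : (fun x ↦ (f x ^ n - g x ^ n) * g x) =O[l] fun x ↦ r x * k x ^ (n + 1) :=
      (ih.mul hg).congr_right fun x ↦ by ring
    exact (hleft.add hright).congr_left fun x ↦ by ring

lemma abs_sqrt_sub_mul_le {a b : ℝ} (ha : 0 ≤ a) (hb : 0 ≤ b) : |√a - b| * b ≤ |a - b ^ 2| :=
  calc |√a - b| * b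
    _ ≤ |√a - b| * (√a + b) := by gcongr; linarith [sqrt_nonneg a]
    _ = |(√a - b) * (√a + b)| := by rw [abs_mul, abs_of_nonneg (add_nonneg (sqrt_nonneg a) hb)]
    _ = |a - b ^ 2| := by congr 1; linear_combination sq_sqrt ha

lemma isBigO_sqrt_sub {f g r : α → ℝ} (hf : ∀ᶠ x in l, 0 ≤ f x) (hg : ∀ᶠ x in l, 0 < g x)
    (hfg : (fun x ↦ f x - g x ^ 2) =O[l] fun x ↦ r x * g x) :
    (fun x ↦ √(f x) - g x) =O[l] r := by
  have hmul : (fun x ↦ (√(f x) - g x) * g x) =O[l] fun x ↦ f x - g x ^ 2 :=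
    .of_bound' <| by
      filter_upwards [hf, hg] with x hfx hgx
      simpa only [norm_eq_abs, abs_mul, abs_of_pos hgx] using abs_sqrt_sub_mul_le hfx hgx.le
  have hne : ∀ᶠ x in l, g x ≠ 0 := hg.mono fun _ ↦ ne_of_gt
  refine ((hmul.trans hfg).mul (isBigO_refl (fun x ↦ (g x)⁻¹) l)).congr' ?_ ?_ <;>
    filter_upwards [hne] with x hx <;> exact mul_inv_cancel_right₀ hx _

end

lemma exp_half_one_sq : exp (1 / 2) ^ 2 = exp 1 := by
  rw [exp_half, sq_sqrt (exp_pos 1).le]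

lemma exp_sub_one_isBigO : (fun u ↦ exp u - 1) =O[𝓝 0] fun u ↦ u := by
  simpa using exp_sub_sum_range_isBigO_pow 1

lemma exp_sub_one_sub_self_isBigO : (fun u ↦ exp u - 1 - u) =O[𝓝 0] fun u ↦ u ^ 2 := by
  simpa [Finset.sum_range_succ, sub_sub] using exp_sub_sum_range_isBigO_pow 2

/-- The bracket of the surplus density `𝒮`, as a function of `z`, so that its third-order vanishing
at `z = 0` can be stated independently of `β`. -/
noncomputable def surplusBracket (z : ℝ) : ℝ :=
  z + z * exp (-z) + 2 * exp (-z) - 2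

lemma SFluid_eq_mul_surplusBracket (β : ℝ) : SFluid β = β * surplusBracket (zOf β) := rfl

lemma surplusBracket_sub_cube_isBigO :
    (fun z ↦ surplusBracket z - z ^ 3 / 6) =O[𝓝 0] fun z ↦ z ^ 4 := by
  have hexp : (fun z ↦ exp (-z) - (1 - z + z ^ 2 / 2 - z ^ 3 / 6)) =O[𝓝 0] fun z ↦ z ^ 4 := by
    have hneg : Tendsto (fun z : ℝ ↦ -z) (𝓝 0) (𝓝 0) := continuous_neg.tendsto' 0 0 neg_zero
    refine ((exp_sub_sum_range_isBigO_pow 4).comp_tendsto hneg).congr (fun z ↦ ?_) (fun z ↦ ?_)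
    · simp only [Function.comp_apply, Finset.sum_range_succ, Finset.sum_range_zero, Nat.factorial]
      push_cast
      ring
    · exact Even.neg_pow (by decide) z
  have hbdd : (fun z : ℝ ↦ z + 2) =O[𝓝 0] fun _ ↦ (1 : ℝ) :=
    (by fun_prop : Continuous fun z : ℝ ↦ z + 2).continuousAt.isBigO_one ℝ
  have hprod := (hbdd.mul hexp).congr_right fun z ↦ one_mul (z ^ 4)
  refine (hprod.sub ((isBigO_refl (fun z : ℝ ↦ z ^ 4) (𝓝 0)).const_mul_left (1 / 6))).congr_left
    fun z ↦ ?_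
  rw [surplusBracket]
  ring

/-- The time left before extinction in the Karp–Sipser fluid limit at parameter `β`. The limit is
parametrised by `β`, with clock `t β = 1 - β - (log β)² / (2e)`, and it dies out at `β = e⁻¹`; this
is `t e⁻¹ - t β`, so that `β(ε)` is the solution of `timeToExtinction β = ε`. -/
noncomputable def timeToExtinction (β : ℝ) : ℝ :=
  1 - 3 / (2 * exp 1) - (1 - β - 1 / (2 * exp 1) * log β ^ 2)

lemma timeToExtinction_exp_sub_one (u : ℝ) :
    timeToExtinction (exp (u - 1)) = (exp u - 1 - u + u ^ 2 / 2) / exp 1 := by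
  rw [timeToExtinction, log_exp, exp_sub]
  field_simp
  ring

lemma sq_le_timeToExtinction_exp_sub_one (u : ℝ) :
    u ^ 2 ≤ 2 * exp 1 * timeToExtinction (exp (u - 1)) := by
  have hmul : 2 * exp 1 * timeToExtinction (exp (u - 1)) = 2 * (exp u - 1 - u) + u ^ 2 := by
    rw [timeToExtinction_exp_sub_one]
    field_simp
  linarith [add_one_le_exp u]

lemma timeToExtinction_exp_sub_one_nonneg (u : ℝ) : 0 ≤ timeToExtinction (exp (u - 1)) :=
  nonneg_of_mul_nonneg_right ((sq_nonneg u).trans (sq_le_timeToExtinction_exp_sub_one u))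
    (by positivity)

lemma timeToExtinction_exp_sub_one_sub_sq_isBigO :
    (fun u ↦ timeToExtinction (exp (u - 1)) - u ^ 2 / exp 1) =O[𝓝 0] fun u ↦ u ^ 3 := by
  refine ((exp_sub_sum_range_isBigO_pow 3).const_mul_left (exp 1)⁻¹).congr_left fun u ↦ ?_
  rw [timeToExtinction_exp_sub_one]
  simp only [Finset.sum_range_succ, Finset.sum_range_zero, Nat.factorial]
  push_cast
  ring

lemma sqrt_timeToExtinction_exp_sub_one_sub_isBigO :
    (fun u ↦ √(timeToExtinction (exp (u - 1))) - u / exp (1 / 2)) =O[𝓝[>] 0] fun u ↦ u ^ 2 := by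
  refine isBigO_sqrt_sub (.of_forall timeToExtinction_exp_sub_one_nonneg)
    (eventually_mem_nhdsWithin.mono fun u hu ↦ div_pos hu (exp_pos _)) ?_
  have hcube : (fun u : ℝ ↦ u ^ 3) =O[𝓝[>] 0] fun u ↦ u ^ 2 * (u / exp (1 / 2)) :=
    ((isBigO_refl _ _).const_mul_left (exp (1 / 2))).congr_left fun u ↦ by field_simp
  have htime := timeToExtinction_exp_sub_one_sub_sq_isBigO.mono (nhdsWithin_le_nhds (s := Ioi 0))
  refine (htime.trans hcube).congr_left fun u ↦ ?_
  rw [div_pow, exp_half_one_sq]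

lemma zOf_exp_sub_one (u : ℝ) : zOf (exp (u - 1)) = exp u + u - 1 := by
  rw [zOf, log_exp, ← exp_add, add_sub_cancel]
  ring

lemma zOf_exp_sub_one_sub_two_mul_isBigO :
    (fun u ↦ zOf (exp (u - 1)) - 2 * u) =O[𝓝 0] fun u ↦ u ^ 2 :=
  exp_sub_one_sub_self_isBigO.congr_left fun u ↦ by rw [zOf_exp_sub_one]; ring

lemma zOf_exp_sub_one_isBigO : (fun u ↦ zOf (exp (u - 1))) =O[𝓝 0] fun u ↦ u :=
  (exp_sub_one_isBigO.add (isBigO_refl (fun u ↦ u) _)).congr_left fun u ↦ by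
    rw [zOf_exp_sub_one]; ring

lemma surplusBracket_zOf_exp_sub_one_sub_cube_isBigO :
    (fun u ↦ surplusBracket (zOf (exp (u - 1))) - 4 / 3 * u ^ 3) =O[𝓝 0] fun u ↦ u ^ 4 := by
  have hz := zOf_exp_sub_one_isBigO
  have hbracket := (surplusBracket_sub_cube_isBigO.comp_tendsto (hz.trans_tendsto tendsto_id)).trans
    (hz.pow 4)
  have hcube : (fun u ↦ zOf (exp (u - 1)) ^ 3 - (2 * u) ^ 3) =O[𝓝 0] fun u ↦ u * u ^ 3 :=
    isBigO_pow_sub_pow hz ((isBigO_refl _ _).const_mul_left 2)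
      (zOf_exp_sub_one_sub_two_mul_isBigO.congr_right sq) 3
  refine (hbracket.add ((hcube.congr_right fun u ↦ (pow_succ' u 3).symm).const_mul_left
    (1 / 6))).congr_left fun u ↦ ?_
  rw [Function.comp_apply]
  ring

lemma SFluid_exp_sub_one_sub_cube_isBigO :
    (fun u ↦ SFluid (exp (u - 1)) - 4 / 3 * u ^ 3 / exp 1) =O[𝓝 0] fun u ↦ u ^ 4 := by
  have hbdd : (fun u ↦ exp (u - 1)) =O[𝓝 0] fun _ ↦ (1 : ℝ) :=
    (by fun_prop : Continuous fun u ↦ exp (u - 1)).continuousAt.tendsto.isBigO_one ℝ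
  have hbracket := (hbdd.mul surplusBracket_zOf_exp_sub_one_sub_cube_isBigO).congr_right
    fun u ↦ one_mul (u ^ 4)
  have hprefactor := ((exp_sub_one_isBigO.mul (isBigO_refl (fun u : ℝ ↦ u ^ 3) _)).congr_right
    fun u ↦ (pow_succ' u 3).symm).const_mul_left (4 / 3 / exp 1)
  refine (hbracket.add hprefactor).congr_left fun u ↦ ?_
  rw [SFluid_eq_mul_surplusBracket, exp_sub]
  ring

lemma sqrt_timeToExtinction_exp_sub_one_pow_sub_isBigO (n : ℕ) :
    (fun u ↦ √(timeToExtinction (exp (u - 1))) ^ n - (u / exp (1 / 2)) ^ n)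
      =O[𝓝[>] 0] fun u ↦ u ^ (n + 1) := by
  have hroot := sqrt_timeToExtinction_exp_sub_one_sub_isBigO
  have hlinear : (fun u ↦ u / exp (1 / 2)) =O[𝓝[>] 0] fun u ↦ u :=
    ((isBigO_refl _ _).const_mul_left (exp (1 / 2))⁻¹).congr_left fun u ↦ inv_mul_eq_div _ u
  have hsq : (fun u : ℝ ↦ u ^ 2) =O[𝓝[>] 0] fun u ↦ u :=
    (isLittleO_pow_id one_lt_two).isBigO.mono nhdsWithin_le_nhds
  have hroot_linear : (fun u ↦ √(timeToExtinction (exp (u - 1)))) =O[𝓝[>] 0] fun u ↦ u :=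
    ((hroot.trans hsq).add hlinear).congr_left fun u ↦ sub_add_cancel _ _
  exact (isBigO_pow_sub_pow hroot_linear hlinear (hroot.congr_right sq) n).congr_right
    fun u ↦ (pow_succ' u n).symm

lemma sq_isBigO_timeToExtinction_exp_sub_one (l : Filter ℝ) :
    (fun u ↦ u ^ 2) =O[l] fun u ↦ timeToExtinction (exp (u - 1)) :=
  .of_bound (2 * exp 1) <| .of_forall fun u ↦ by
    simpa only [norm_eq_abs, abs_of_nonneg (sq_nonneg u),
      abs_of_nonneg (timeToExtinction_exp_sub_one_nonneg u)]
      using sq_le_timeToExtinction_exp_sub_one u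

lemma SFluid_exp_sub_one_sub_sqrt_timeToExtinction_cube_isBigO :
    (fun u ↦ SFluid (exp (u - 1)) - 4 * exp (1 / 2) / 3 * √(timeToExtinction (exp (u - 1))) ^ 3)
      =O[𝓝[>] 0] fun u ↦ timeToExtinction (exp (u - 1)) ^ 2 := by
  have hsurplus := SFluid_exp_sub_one_sub_cube_isBigO.mono (nhdsWithin_le_nhds (s := Ioi 0))
  have hroot := (sqrt_timeToExtinction_exp_sub_one_pow_sub_isBigO 3).const_mul_left
    (4 * exp (1 / 2) / 3)
  have hquartic : (fun u : ℝ ↦ u ^ 4) =O[𝓝[>] 0] fun u ↦ timeToExtinction (exp (u - 1)) ^ 2 :=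
    ((sq_isBigO_timeToExtinction_exp_sub_one _).pow 2).congr_left fun u ↦ (pow_mul u 2 2).symm
  refine ((hsurplus.sub hroot).congr_left fun u ↦ ?_).trans hquartic
  rw [← exp_half_one_sq]
  field_simp
  ring

lemma tendsto_one_add_log_nhdsGT_zero {α : Type*} {l : Filter α} {β : α → ℝ}
    (hβ : ∀ᶠ x in l, (exp 1)⁻¹ < β x) (htime : Tendsto (fun x ↦ timeToExtinction (β x)) l (𝓝 0)) :
    Tendsto (fun x ↦ 1 + log (β x)) l (𝓝[>] 0) := by
  have hinv : 0 < (exp 1)⁻¹ := inv_pos.mpr (exp_pos 1)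
  refine tendsto_nhdsWithin_iff.mpr ⟨?_, ?_⟩
  · have hbound : Tendsto (fun x ↦ √(2 * exp 1 * timeToExtinction (β x))) l (𝓝 0) := by
      simpa using (htime.const_mul (2 * exp 1)).sqrt
    refine squeeze_zero_norm' (hβ.mono fun x hx ↦ abs_le_sqrt ?_) hbound
    simpa [exp_log (hinv.trans hx)] using sq_le_timeToExtinction_exp_sub_one (1 + log (β x))
  · filter_upwards [hβ] with x hx
    have hlog := log_lt_log hinv hx
    rw [log_inv, log_exp] at hlog
    exact neg_lt_iff_pos_add'.mp hlog

/-- For `ε > 0` let `B ε` be the unique `β > e⁻¹` with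
`1 - β - (1/(2e)) (log β)² = 1 - 3/(2e) - ε`. With `z β = e β + log β` and
`𝒮 β = β (z β + z β exp(-z β) + 2 exp(-z β) - 2)`, one has
`𝒮 (B ε) = (4 e^{1/2}/3) ε^{3/2} + O(ε²)` as `ε → 0⁺`. -/
theorem karpSipser_surplus_asymptotic_at_extinction (B : ℝ → ℝ)
    (hB : ∀ ε : ℝ, 0 < ε →
      (Real.exp 1)⁻¹ < B ε ∧
        1 - B ε - 1 / (2 * Real.exp 1) * (Real.log (B ε)) ^ 2
          = 1 - 3 / (2 * Real.exp 1) - ε) :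
    (fun ε : ℝ => SFluid (B ε) - 4 * Real.exp (1 / 2) / 3 * (ε * Real.sqrt ε))
      =O[𝓝[>] (0 : ℝ)] (fun ε : ℝ => ε ^ 2) := by
  have hpos : ∀ᶠ ε : ℝ in 𝓝[>] 0, 0 < ε := eventually_mem_nhdsWithin
  have htime : ∀ ε, 0 < ε → timeToExtinction (B ε) = ε := fun ε hε ↦ by
    rw [timeToExtinction, (hB ε hε).2, sub_sub_cancel]
  have htime_tendsto : Tendsto (fun ε ↦ timeToExtinction (B ε)) (𝓝[>] 0) (𝓝 0) :=
    (tendsto_id.mono_left nhdsWithin_le_nhds).congr' (hpos.mono fun ε hε ↦ (htime ε hε).symm)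
  have hshift := tendsto_one_add_log_nhdsGT_zero
    (hpos.mono fun ε hε ↦ (hB ε hε).1) htime_tendsto
  have hexp : ∀ ε, 0 < ε → exp (1 + log (B ε) - 1) = B ε := fun ε hε ↦ by
    rw [add_sub_cancel_left, exp_log ((inv_pos.mpr (exp_pos 1)).trans (hB ε hε).1)]
  refine (SFluid_exp_sub_one_sub_sqrt_timeToExtinction_cube_isBigO.comp_tendsto hshift).congr'
    (hpos.mono fun ε hε ↦ ?_) (hpos.mono fun ε hε ↦ ?_)
  · simp only [Function.comp_apply, hexp ε hε, htime ε hε, pow_succ √ε 2, sq_sqrt hε.le]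
  · simp only [Function.comp_apply, hexp ε hε, htime ε hε]
end

section
/- For ε > 0, let β(ε) denote the unique β > e^{−1} with 1 − β − (1/(2e))·(log β)² = 1 − 3/(2e) − ε; set z(β) = e·β + log β, 𝒳(β) = e^{−1}·z(β)² − z(β)·β·(1 − exp(−z(β))), 𝒱(β) = β·exp(−z(β))·(exp(z(β)) − z(β) − 1), and 𝒮(β) = β·(z(β) + z(β)·exp(−z(β)) + 2·exp(−z(β)) − 2). Then there exists ε₀ > 0 such that the maps ε ↦ 𝒳(β(ε)), ε ↦ 𝒱(β(ε)), and ε ↦ 𝒮(β(ε)) are twice differentiable on (0, ε₀), the second derivative of ε ↦ 𝒳(β(ε)) is O(1) as ε → 0+, and the second derivatives of ε ↦ 𝒱(β(ε)) and of ε ↦ 𝒮(β(ε)) are both O(ε^{−1/2}) as ε → 0+. -/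
open Real Filter Set Topology Asymptotics

noncomputable def XFluid (β : ℝ) : ℝ :=
  (Real.exp 1)⁻¹ * (zOf β) ^ 2 - zOf β * β * (1 - Real.exp (-(zOf β)))

noncomputable def VFluid (β : ℝ) : ℝ :=
  β * Real.exp (-(zOf β)) * (Real.exp (zOf β) - zOf β - 1)

/-!
Let `τ β = β + (log β)² / (2e) - 3 / (2e)`, so that `B` inverts `τ` on `(e⁻¹, ∞)`. Here
`τ' β = z β / (e β)`, and `e⁻¹` is a nondegenerate critical point of `τ` because `z` has a simple
zero there; hence `τ' (B ε)` is at least of order `√ε`. The derivatives of `𝒳`, `𝒱` and `𝒮` all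
vanish with `z`: each has the form `F' = τ' g` with `g` analytic on `(0, ∞)`, involving `z` through
the entire function `(1 - exp (-z)) / z`. Therefore `(F ∘ B)' = g ∘ B` and
`(F ∘ B)'' = (g' / τ') ∘ B`, which is `O(ε^{-1/2})`. For `𝒳` there is an extra cancellation
`g' (e⁻¹) = 0`, which makes `g' / τ'` bounded.
-/

section Dslope

variable {𝕜 E : Type*} [NontriviallyNormedField 𝕜] [NormedAddCommGroup E] [NormedSpace 𝕜 E]

lemma analyticAt_dslope {f : 𝕜 → E} {a z : 𝕜} (ha : AnalyticAt 𝕜 f a) (hz : AnalyticAt 𝕜 f z) :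
    AnalyticAt 𝕜 (dslope f a) z := by
  rcases eq_or_ne z a with rfl | hza
  · obtain ⟨p, hp⟩ := ha
    exact hp.has_fpower_series_dslope_fslope.analyticAt
  · have hslope : AnalyticAt 𝕜 (fun w => (w - a)⁻¹ • (f w - f a)) z :=
      ((analyticAt_id.sub analyticAt_const).inv (sub_ne_zero.2 hza)).smul (hz.sub analyticAt_const)
    refine hslope.congr ?_
    filter_upwards [isOpen_ne.mem_nhds hza] with w hw
    rw [dslope_of_ne _ hw, slope, vsub_eq_sub]

lemma deriv_dslope_same [CompleteSpace 𝕜] [CharZero 𝕜] {f : 𝕜 → 𝕜} {a : 𝕜}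
    (hf : AnalyticAt 𝕜 f a) : deriv (dslope f a) a = deriv (deriv f) a / 2 := by
  rw [hf.hasFPowerSeriesAt.has_fpower_series_dslope_fslope.deriv]
  change FormalMultilinearSeries.coeff _ 1 = _
  rw [FormalMultilinearSeries.coeff_fslope, FormalMultilinearSeries.coeff_ofScalars,
    iteratedDeriv_succ, iteratedDeriv_one, Nat.factorial_two, Nat.cast_two]

end Dslope

section CriticalPoint

lemma isTheta_sub_of_hasDerivAt {𝕜 E : Type*} [NontriviallyNormedField 𝕜] [NormedAddCommGroup E]
    [NormedSpace 𝕜 E] {f : 𝕜 → E} {f' : E} {a : 𝕜} (hf : HasDerivAt f f' a) (hf' : f' ≠ 0) :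
    (fun x => f x - f a) =Θ[𝓝 a] fun x => x - a := by
  have hpair : Tendsto (fun x => (x, a)) (𝓝 a) (𝓝 a ×ˢ pure a) :=
    tendsto_id.prodMk tendsto_const_pure
  have htheta := hf.isTheta_sub hf'
  exact ⟨htheta.isBigO.comp_tendsto hpair, htheta.isBigO_symm.comp_tendsto hpair⟩

lemma isBigO_sub_sq_nhdsGE {E : Type*} [NormedAddCommGroup E] [NormedSpace ℝ E]
    {f f' : ℝ → E} {a : ℝ} (hf : ∀ x ∈ Ici a, HasDerivWithinAt f (f' x) (Ici a) x)
    (hf' : f' =O[𝓝[≥] a] fun x => x - a) :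
    (fun x => f x - f a) =O[𝓝[≥] a] fun x => (x - a) ^ 2 := by
  obtain ⟨C, hC, hbound⟩ := hf'.exists_pos
  obtain ⟨b, hab, hb⟩ := mem_nhdsGE_iff_exists_Ico_subset.1 hbound.bound
  refine IsBigO.of_bound C ?_
  filter_upwards [Ico_mem_nhdsGE hab] with x hx
  have hle : ∀ y ∈ Ico a x, ‖f' y‖ ≤ C * (x - a) := fun y hy => by
    have := hb ⟨hy.1, hy.2.trans hx.2⟩
    rw [mem_ofPred_eq, Real.norm_of_nonneg (sub_nonneg.2 hy.1)] at this
    exact this.trans (by gcongr; exact hy.2.le)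
  have hmv := norm_image_sub_le_of_norm_deriv_le_segment'
    (fun y hy => (hf y hy.1).mono Icc_subset_Ici_self) hle x (right_mem_Icc.2 hx.1)
  rwa [norm_pow, Real.norm_of_nonneg (sub_nonneg.2 hx.1), sq, ← mul_assoc]

end CriticalPoint

/-- `σ` is the inverse of the increasing function `φ` on `(a, ∞)`, the branch of `φ⁻¹` to the right
of a (possibly critical) point `a`. The values of `σ` outside `(φ a, ∞)` are arbitrary. -/
structure IsInverseBranchAbove {α β : Type*} [Preorder α] [Preorder β]
    (φ : α → β) (σ : β → α) (a : α) : Prop where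
  strictMonoOn : StrictMonoOn φ (Ici a)
  mapsTo : MapsTo σ (Ioi (φ a)) (Ioi a)
  rightInvOn : RightInvOn σ φ (Ioi (φ a))

namespace IsInverseBranchAbove

section Order

variable {α β : Type*} [LinearOrder α] [LinearOrder β] {φ : α → β} {σ : β → α} {a : α}

lemma lt_iff_lt (h : IsInverseBranchAbove φ σ a) {x : α} {y : β} (hx : a ≤ x) (hy : φ a < y) :
    σ y < x ↔ y < φ x := by
  rw [← h.strictMonoOn.lt_iff_lt (h.mapsTo hy).le hx, h.rightInvOn hy]

lemma monotoneOn (h : IsInverseBranchAbove φ σ a) : MonotoneOn σ (Ioi (φ a)) := by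
  intro x hx y hy hxy
  rw [← h.strictMonoOn.le_iff_le (h.mapsTo hx).le (h.mapsTo hy).le, h.rightInvOn hx,
    h.rightInvOn hy]
  exact hxy

lemma surjOn (h : IsInverseBranchAbove φ σ a) : SurjOn σ (Ioi (φ a)) (Ioi a) := by
  intro x hx
  have hφx : φ a < φ x := h.strictMonoOn self_mem_Ici hx.le hx
  exact ⟨φ x, hφx, h.strictMonoOn.injOn (h.mapsTo hφx).le hx.le (h.rightInvOn hφx)⟩

variable [TopologicalSpace α] [OrderTopology α] [TopologicalSpace β] [OrderTopology β]

lemma continuousAt [DenselyOrdered α] (h : IsInverseBranchAbove φ σ a) {y : β} (hy : φ a < y) :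
    ContinuousAt σ y :=
  continuousAt_of_monotoneOn_of_image_mem_nhds h.monotoneOn (Ioi_mem_nhds hy)
    (mem_of_superset (Ioi_mem_nhds (h.mapsTo hy)) h.surjOn)

lemma tendsto_nhdsGT (h : IsInverseBranchAbove φ σ a) : Tendsto σ (𝓝[>] φ a) (𝓝[>] a) := by
  refine tendsto_nhdsWithin_iff.2 ⟨tendsto_order.2 ⟨fun x hx => ?_, fun x hx => ?_⟩, ?_⟩
  · filter_upwards [self_mem_nhdsWithin] with y hy using hx.trans (h.mapsTo hy)
  · have hφx : φ a < φ x := h.strictMonoOn self_mem_Ici hx.le hx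
    filter_upwards [self_mem_nhdsWithin, nhdsWithin_le_nhds (Iio_mem_nhds hφx)] with y hy hyx
    exact (h.lt_iff_lt hx.le hy).2 hyx
  · filter_upwards [self_mem_nhdsWithin] with y hy using h.mapsTo hy

end Order

section Deriv

variable {φ ψ σ F g : ℝ → ℝ} {a y : ℝ}

lemma hasDerivAt (h : IsInverseBranchAbove φ σ a) (hy : φ a < y) {φ' : ℝ}
    (hφ : HasDerivAt φ φ' (σ y)) (hφ' : φ' ≠ 0) : HasDerivAt σ φ'⁻¹ y :=
  hφ.of_local_left_inverse (h.continuousAt hy) hφ'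
    (by filter_upwards [Ioi_mem_nhds hy] with w hw using h.rightInvOn hw)

lemma hasDerivAt_comp (h : IsInverseBranchAbove φ σ a) (hy : φ a < y) {p q : ℝ}
    (hφ : HasDerivAt φ p (σ y)) (hp : p ≠ 0) (hF : HasDerivAt F (p * q) (σ y)) :
    HasDerivAt (fun u => F (σ u)) q y :=
  (hF.comp y (h.hasDerivAt hy hφ hp)).congr_deriv (by field_simp)

lemma hasDerivAt_deriv_comp (h : IsInverseBranchAbove φ σ a)
    (hφ : ∀ x ∈ Ioi a, HasDerivAt φ (ψ x) x) (hψ : ∀ x ∈ Ioi a, ψ x ≠ 0)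
    (hF : ∀ x ∈ Ioi a, HasDerivAt F (ψ x * g x) x) (hy : φ a < y)
    (hg : DifferentiableAt ℝ g (σ y)) :
    HasDerivAt (deriv fun u => F (σ u)) (deriv g (σ y) / ψ (σ y)) y := by
  have hσy : σ y ∈ Ioi a := h.mapsTo hy
  have hcomp : HasDerivAt (fun u => g (σ u)) (deriv g (σ y) / ψ (σ y)) y :=
    hg.hasDerivAt.comp y (h.hasDerivAt hy (hφ _ hσy) (hψ _ hσy))
  refine hcomp.congr_of_eventuallyEq ?_
  filter_upwards [Ioi_mem_nhds hy] with w hw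
  have hσw : σ w ∈ Ioi a := h.mapsTo hw
  exact (h.hasDerivAt_comp hw (hφ _ hσw) (hψ _ hσw) (hF _ hσw)).deriv

lemma differentiableAt_comp_and_deriv (h : IsInverseBranchAbove φ σ a)
    (hφ : ∀ x ∈ Ioi a, HasDerivAt φ (ψ x) x) (hψ : ∀ x ∈ Ioi a, ψ x ≠ 0)
    (hF : ∀ x ∈ Ioi a, HasDerivAt F (ψ x * g x) x) (hy : φ a < y)
    (hg : DifferentiableAt ℝ g (σ y)) :
    DifferentiableAt ℝ (fun u => F (σ u)) y ∧
      DifferentiableAt ℝ (deriv fun u => F (σ u)) y :=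
  have hσy : σ y ∈ Ioi a := h.mapsTo hy
  ⟨(h.hasDerivAt_comp hy (hφ _ hσy) (hψ _ hσy) (hF _ hσy)).differentiableAt,
    (h.hasDerivAt_deriv_comp hφ hψ hF hy hg).differentiableAt⟩

lemma deriv_deriv_comp_eventuallyEq (h : IsInverseBranchAbove φ σ a)
    (hφ : ∀ x ∈ Ioi a, HasDerivAt φ (ψ x) x) (hψ : ∀ x ∈ Ioi a, ψ x ≠ 0)
    (hF : ∀ x ∈ Ioi a, HasDerivAt F (ψ x * g x) x) (hg : ∀ x ∈ Ioi a, DifferentiableAt ℝ g x) :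
    deriv (deriv fun u => F (σ u)) =ᶠ[𝓝[>] φ a] fun y => deriv g (σ y) / ψ (σ y) := by
  filter_upwards [self_mem_nhdsWithin] with y hy
  exact (h.hasDerivAt_deriv_comp hφ hψ hF hy (hg _ (h.mapsTo hy))).deriv

lemma isBigO_inv_deriv_comp (h : IsInverseBranchAbove φ σ a)
    (hφ : ∀ x ∈ Ici a, HasDerivAt φ (ψ x) x) (hψ : ψ =Θ[𝓝[≥] a] fun x => x - a) :
    (fun y => (ψ (σ y))⁻¹) =O[𝓝[>] φ a] fun y => (√(y - φ a))⁻¹ := by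
  have hquad : (fun x => φ x - φ a) =O[𝓝[≥] a] fun x => ψ x ^ 2 :=
    (isBigO_sub_sq_nhdsGE (fun x hx => (hφ x hx).hasDerivWithinAt) hψ.isBigO).trans
      (hψ.isBigO_symm.pow 2)
  have hσ : Tendsto σ (𝓝[>] φ a) (𝓝[≥] a) :=
    h.tendsto_nhdsGT.mono_right (nhdsWithin_mono a Ioi_subset_Ici_self)
  have hsq : (fun y => √(y - φ a) ^ 2) =O[𝓝[>] φ a] fun y => ψ (σ y) ^ 2 := by
    refine (hquad.comp_tendsto hσ).congr' ?_ .rfl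
    filter_upwards [self_mem_nhdsWithin] with y hy
    rw [Function.comp_apply, h.rightInvOn hy, Real.sq_sqrt (sub_nonneg.2 hy.le)]
  refine (hsq.of_pow two_ne_zero).inv_rev ?_
  filter_upwards [self_mem_nhdsWithin] with y hy hzero
  exact absurd hzero (Real.sqrt_pos.2 (sub_pos.2 hy)).ne'

theorem isBigO_deriv_deriv_comp_inv_sqrt (h : IsInverseBranchAbove φ σ a)
    (hφ : ∀ x ∈ Ici a, HasDerivAt φ (ψ x) x) (hψ : ∀ x ∈ Ioi a, ψ x ≠ 0)
    (hψa : ψ =Θ[𝓝[≥] a] fun x => x - a) (hF : ∀ x ∈ Ioi a, HasDerivAt F (ψ x * g x) x)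
    (hg : ∀ x ∈ Ioi a, DifferentiableAt ℝ g x) (hga : deriv g =O[𝓝[>] a] fun _ => (1 : ℝ)) :
    deriv (deriv fun u => F (σ u)) =O[𝓝[>] φ a] fun y => (√(y - φ a))⁻¹ := by
  have hmul := (hga.comp_tendsto h.tendsto_nhdsGT).mul (h.isBigO_inv_deriv_comp hφ hψa)
  refine (h.deriv_deriv_comp_eventuallyEq (fun x hx => hφ x (Ioi_subset_Ici_self hx))
    hψ hF hg).trans_isBigO ?_
  simpa [Function.comp_def, div_eq_mul_inv] using hmul

theorem isBigO_deriv_deriv_comp_one (h : IsInverseBranchAbove φ σ a)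
    (hφ : ∀ x ∈ Ioi a, HasDerivAt φ (ψ x) x) (hψ : ∀ x ∈ Ioi a, ψ x ≠ 0)
    (hF : ∀ x ∈ Ioi a, HasDerivAt F (ψ x * g x) x) (hg : ∀ x ∈ Ioi a, DifferentiableAt ℝ g x)
    (hga : deriv g =O[𝓝[>] a] ψ) :
    deriv (deriv fun u => F (σ u)) =O[𝓝[>] φ a] fun _ => (1 : ℝ) := by
  have hdiv : (fun x => deriv g x / ψ x) =O[𝓝[>] a] fun _ => (1 : ℝ) := by
    refine hga.mul (isBigO_refl (fun x => (ψ x)⁻¹) _) |>.congr' ?_ ?_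
    · exact .of_eq (funext fun x => (div_eq_mul_inv _ _).symm)
    · filter_upwards [self_mem_nhdsWithin] with x hx using mul_inv_cancel₀ (hψ x hx)
  exact (h.deriv_deriv_comp_eventuallyEq hφ hψ hF hg).trans_isBigO
    (hdiv.comp_tendsto h.tendsto_nhdsGT)

end Deriv

end IsInverseBranchAbove

/-- The time remaining before extinction in state `β`, i.e. the `ε` with `β = β(ε)`. -/
noncomputable def extinctionTime (β : ℝ) : ℝ :=
  β + 1 / (2 * exp 1) * log β ^ 2 - 3 / (2 * exp 1)

/-- The derivative `dε/dβ` of `extinctionTime`. -/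
noncomputable def extinctionSlope (β : ℝ) : ℝ := zOf β / (exp 1 * β)

lemma extinctionTime_exp_one_inv : extinctionTime (exp 1)⁻¹ = 0 := by
  rw [extinctionTime, log_inv, log_exp]
  field_simp
  norm_num

lemma zOf_exp_one_inv : zOf (exp 1)⁻¹ = 0 := by
  simp [zOf, (exp_pos 1).ne']

lemma zOf_pos {β : ℝ} (hβ : (exp 1)⁻¹ < β) : 0 < zOf β := by
  have hmul : 1 < exp 1 * β := by rwa [inv_lt_iff_one_lt_mul₀' (exp_pos 1)] at hβ
  have hlog := log_lt_log (by positivity) hβ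
  rw [log_inv, log_exp] at hlog
  rw [zOf]
  linarith

lemma hasDerivAt_zOf {β : ℝ} (hβ : β ≠ 0) : HasDerivAt zOf (exp 1 + β⁻¹) β :=
  (((hasDerivAt_id β).const_mul (exp 1)).add (hasDerivAt_log hβ)).congr_deriv (by simp)

lemma analyticAt_zOf {β : ℝ} (hβ : 0 < β) : AnalyticAt ℝ zOf β :=
  (analyticAt_const.mul analyticAt_id).add (analyticAt_log hβ)

lemma hasDerivAt_extinctionTime {β : ℝ} (hβ : β ≠ 0) :
    HasDerivAt extinctionTime (extinctionSlope β) β := by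
  refine (((hasDerivAt_id β).add (((hasDerivAt_log hβ).pow 2).const_mul
    (1 / (2 * exp 1)))).sub_const (3 / (2 * exp 1))).congr_deriv ?_
  rw [extinctionSlope, zOf]
  field_simp
  push_cast
  ring

lemma pos_of_exp_one_inv_le {β : ℝ} (hβ : (exp 1)⁻¹ ≤ β) : 0 < β :=
  (inv_pos.2 (exp_pos 1)).trans_le hβ

lemma extinctionSlope_pos {β : ℝ} (hβ : (exp 1)⁻¹ < β) : 0 < extinctionSlope β :=
  div_pos (zOf_pos hβ) (mul_pos (exp_pos 1) (pos_of_exp_one_inv_le hβ.le))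

lemma strictMonoOn_extinctionTime : StrictMonoOn extinctionTime (Ici (exp 1)⁻¹) := by
  refine strictMonoOn_of_hasDerivWithinAt_pos (convex_Ici _)
    (f' := extinctionSlope) (fun β hβ => ?_) (fun β hβ => ?_) (fun β hβ => ?_)
  · exact (hasDerivAt_extinctionTime
      (pos_of_exp_one_inv_le hβ).ne').continuousAt.continuousWithinAt
  · exact (hasDerivAt_extinctionTime
      (pos_of_exp_one_inv_le (interior_subset hβ)).ne').hasDerivWithinAt
  · rw [interior_Ici] at hβ
    exact extinctionSlope_pos hβ

lemma isTheta_extinctionSlope :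
    extinctionSlope =Θ[𝓝[≥] (exp 1)⁻¹] fun β => β - (exp 1)⁻¹ := by
  have hderiv : HasDerivAt extinctionSlope (2 * exp 1) (exp 1)⁻¹ := by
    have he : exp 1 * (exp 1)⁻¹ ≠ 0 := by positivity
    refine ((hasDerivAt_zOf (by positivity)).div
      ((hasDerivAt_id _).const_mul (exp 1)) he).congr_deriv ?_
    simp only [id, zOf_exp_one_inv]
    field_simp
    ring
  have hzero : extinctionSlope (exp 1)⁻¹ = 0 := by rw [extinctionSlope, zOf_exp_one_inv, zero_div]
  simpa only [hzero, sub_zero] using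
    (isTheta_sub_of_hasDerivAt hderiv (by positivity)).mono nhdsWithin_le_nhds

lemma isInverseBranchAbove_extinctionTime {B : ℝ → ℝ}
    (hB : ∀ ε : ℝ, 0 < ε → (exp 1)⁻¹ < B ε ∧
      1 - B ε - 1 / (2 * exp 1) * log (B ε) ^ 2 = 1 - 3 / (2 * exp 1) - ε) :
    IsInverseBranchAbove extinctionTime B (exp 1)⁻¹ where
  strictMonoOn := strictMonoOn_extinctionTime
  mapsTo ε hε := (hB ε (extinctionTime_exp_one_inv ▸ hε)).1
  rightInvOn ε hε := by
    have := (hB ε (extinctionTime_exp_one_inv ▸ hε)).2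
    rw [extinctionTime]
    linarith

/-- The entire function `z ↦ (1 - exp (-z)) / z`, with its value `1` at the removable singularity
`0`. It carries the division by `z` in the rates below. -/
noncomputable def expNegSlope : ℝ → ℝ := dslope (fun z => 1 - exp (-z)) 0

lemma analyticAt_expNegSlope (z : ℝ) : AnalyticAt ℝ expNegSlope z :=
  analyticAt_dslope (by fun_prop) (by fun_prop)

lemma mul_expNegSlope (z : ℝ) : z * expNegSlope z = 1 - exp (-z) := by
  simpa [expNegSlope] using sub_smul_dslope (fun z : ℝ => 1 - exp (-z)) 0 z

lemma hasDerivAt_one_sub_exp_neg (z : ℝ) : HasDerivAt (fun z => 1 - exp (-z)) (exp (-z)) z := by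
  simpa using (hasDerivAt_neg z).exp.const_sub 1

lemma expNegSlope_zero : expNegSlope 0 = 1 := by
  simpa [expNegSlope] using (hasDerivAt_one_sub_exp_neg 0).deriv

lemma deriv_expNegSlope_zero : deriv expNegSlope 0 = -1 / 2 := by
  have hderiv : deriv (fun z => 1 - exp (-z)) = fun z => exp (-z) :=
    funext fun z => (hasDerivAt_one_sub_exp_neg z).deriv
  rw [expNegSlope, deriv_dslope_same (by fun_prop), hderiv, (hasDerivAt_neg 0).exp.deriv]
  simp

/-- `g` is the rate `dF/dε` of the observable `F`, expressed as a function of the state `β`. Since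
`dε/dβ = z / (e β)` vanishes at `e⁻¹`, regularity of `g` there is a genuine condition on `F`. -/
structure IsExtinctionRate (F g : ℝ → ℝ) : Prop where
  hasDerivAt : ∀ β, 0 < β → HasDerivAt F (extinctionSlope β * g β) β
  analyticAt : ∀ β, 0 < β → AnalyticAt ℝ g β

namespace IsExtinctionRate

variable {F g B : ℝ → ℝ} {ε : ℝ}

lemma differentiableAt_comp_and_deriv (hF : IsExtinctionRate F g)
    (hB : IsInverseBranchAbove extinctionTime B (exp 1)⁻¹) (hε : 0 < ε) :
    DifferentiableAt ℝ (fun u => F (B u)) ε ∧ DifferentiableAt ℝ (deriv fun u => F (B u)) ε := by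
  rw [← extinctionTime_exp_one_inv] at hε
  exact hB.differentiableAt_comp_and_deriv
    (fun β hβ => hasDerivAt_extinctionTime (pos_of_exp_one_inv_le hβ.le).ne')
    (fun β hβ => (extinctionSlope_pos hβ).ne')
    (fun β hβ => hF.hasDerivAt β (pos_of_exp_one_inv_le hβ.le)) hε
    (hF.analyticAt _ (pos_of_exp_one_inv_le (hB.mapsTo hε).le)).differentiableAt

lemma isBigO_deriv_deriv_comp_inv_sqrt (hF : IsExtinctionRate F g)
    (hB : IsInverseBranchAbove extinctionTime B (exp 1)⁻¹) :
    deriv (deriv fun u => F (B u)) =O[𝓝[>] 0] fun ε => (√ε)⁻¹ := by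
  have hg : deriv g =O[𝓝[>] (exp 1)⁻¹] fun _ => (1 : ℝ) :=
    ((hF.analyticAt _ (pos_of_exp_one_inv_le le_rfl)).deriv.continuousAt.tendsto.mono_left
      nhdsWithin_le_nhds).isBigO_one ℝ
  simpa only [extinctionTime_exp_one_inv, sub_zero] using hB.isBigO_deriv_deriv_comp_inv_sqrt
    (fun β hβ => hasDerivAt_extinctionTime (pos_of_exp_one_inv_le hβ).ne')
    (fun β hβ => (extinctionSlope_pos hβ).ne') isTheta_extinctionSlope
    (fun β hβ => hF.hasDerivAt β (pos_of_exp_one_inv_le hβ.le))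
    (fun β hβ => (hF.analyticAt β (pos_of_exp_one_inv_le hβ.le)).differentiableAt) hg

lemma isBigO_deriv_deriv_comp_one (hF : IsExtinctionRate F g)
    (hB : IsInverseBranchAbove extinctionTime B (exp 1)⁻¹) (hg : deriv g (exp 1)⁻¹ = 0) :
    deriv (deriv fun u => F (B u)) =O[𝓝[>] 0] fun _ => (1 : ℝ) := by
  have hsub : deriv g =O[𝓝 (exp 1)⁻¹] fun β => β - (exp 1)⁻¹ := by
    simpa only [hg, sub_zero] using
      (hF.analyticAt _ (pos_of_exp_one_inv_le le_rfl)).deriv.differentiableAt.isBigO_sub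
  simpa only [extinctionTime_exp_one_inv] using hB.isBigO_deriv_deriv_comp_one
    (fun β hβ => hasDerivAt_extinctionTime (pos_of_exp_one_inv_le hβ.le).ne')
    (fun β hβ => (extinctionSlope_pos hβ).ne')
    (fun β hβ => hF.hasDerivAt β (pos_of_exp_one_inv_le hβ.le))
    (fun β hβ => (hF.analyticAt β (pos_of_exp_one_inv_le hβ.le)).differentiableAt)
    ((hsub.mono nhdsWithin_le_nhds).trans
      (isTheta_extinctionSlope.isBigO_symm.mono (nhdsWithin_mono _ Ioi_subset_Ici_self)))

end IsExtinctionRate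

/-- `d𝒳/dε` as a function of `β`. -/
noncomputable def XRate (β : ℝ) : ℝ :=
  exp 1 * β + 2 - exp 1 * β * (exp 1 * β + 1) * expNegSlope (zOf β)
    - (exp 1 * β) ^ 2 * exp (-zOf β)

/-- `d𝒱/dε` as a function of `β`. -/
noncomputable def VRate (β : ℝ) : ℝ :=
  exp 1 * β * (expNegSlope (zOf β) + exp 1 * β * exp (-zOf β))

/-- `d𝒮/dε` as a function of `β`. -/
noncomputable def SRate (β : ℝ) : ℝ :=
  exp 1 * β * (1 + (exp 1 * β - 1) * expNegSlope (zOf β) - exp 1 * β * exp (-zOf β))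

section Rates

variable {β : ℝ}

lemma hasDerivAt_exp_neg_zOf (hβ : β ≠ 0) :
    HasDerivAt (fun β => exp (-zOf β)) (exp (-zOf β) * -(exp 1 + β⁻¹)) β :=
  (hasDerivAt_zOf hβ).neg.exp

lemma hasDerivAt_XFluid (hβ : β ≠ 0) :
    HasDerivAt XFluid (extinctionSlope β * XRate β) β := by
  have hz := hasDerivAt_zOf hβ
  refine (((hz.pow 2).const_mul (exp 1)⁻¹).sub ((hz.mul (hasDerivAt_id β)).mul
    ((hasDerivAt_exp_neg_zOf hβ).const_sub 1))).congr_deriv ?_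
  simp only [extinctionSlope, XRate, Pi.mul_apply, id]
  field_simp
  push_cast
  linear_combination (exp 1 * β + 1) * exp 1 * β * mul_expNegSlope (zOf β)

lemma hasDerivAt_VFluid (hβ : β ≠ 0) :
    HasDerivAt VFluid (extinctionSlope β * VRate β) β := by
  have hV : VFluid = fun β => β * (1 - (zOf β + 1) * exp (-zOf β)) := by
    funext β
    have hexp : exp (-zOf β) * exp (zOf β) = 1 := by rw [← exp_add, neg_add_cancel, exp_zero]
    rw [VFluid]
    linear_combination β * hexp
  rw [hV]
  refine ((hasDerivAt_id β).mul ((((hasDerivAt_zOf hβ).add_const 1).mul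
    (hasDerivAt_exp_neg_zOf hβ)).const_sub 1)).congr_deriv ?_
  simp only [extinctionSlope, VRate, Pi.mul_apply, id]
  field_simp
  linear_combination -mul_expNegSlope (zOf β)

lemma hasDerivAt_SFluid (hβ : β ≠ 0) :
    HasDerivAt SFluid (extinctionSlope β * SRate β) β := by
  have hz := hasDerivAt_zOf hβ
  have hexp := hasDerivAt_exp_neg_zOf hβ
  refine ((hasDerivAt_id β).mul (((hz.add (hz.mul hexp)).add
    (hexp.const_mul 2)).sub_const 2)).congr_deriv ?_
  simp only [extinctionSlope, SRate, Pi.mul_apply, Pi.add_apply, id]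
  field_simp
  linear_combination (1 - exp 1 * β) * mul_expNegSlope (zOf β)

lemma analyticAt_XRate (hβ : 0 < β) : AnalyticAt ℝ XRate β := by
  have hz := analyticAt_zOf hβ
  have hslope := (analyticAt_expNegSlope (zOf β)).fun_comp hz
  unfold XRate
  fun_prop

lemma analyticAt_VRate (hβ : 0 < β) : AnalyticAt ℝ VRate β := by
  have hz := analyticAt_zOf hβ
  have hslope := (analyticAt_expNegSlope (zOf β)).fun_comp hz
  unfold VRate
  fun_prop

lemma analyticAt_SRate (hβ : 0 < β) : AnalyticAt ℝ SRate β := by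
  have hz := analyticAt_zOf hβ
  have hslope := (analyticAt_expNegSlope (zOf β)).fun_comp hz
  unfold SRate
  fun_prop

lemma deriv_XRate_exp_one_inv : deriv XRate (exp 1)⁻¹ = 0 := by
  have he : (exp 1)⁻¹ ≠ 0 := by positivity
  have hw : HasDerivAt (fun β => exp 1 * β) (exp 1) (exp 1)⁻¹ := by
    simpa using (hasDerivAt_id (exp 1)⁻¹).const_mul (exp 1)
  have hslope : HasDerivAt (fun β => expNegSlope (zOf β)) _ (exp 1)⁻¹ :=
    (analyticAt_expNegSlope _).differentiableAt.hasDerivAt.comp _ (hasDerivAt_zOf he)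
  have hrate : HasDerivAt XRate _ (exp 1)⁻¹ :=
    ((hw.add_const 2).sub ((hw.mul (hw.add_const 1)).mul hslope)).sub
      ((hw.pow 2).mul (hasDerivAt_exp_neg_zOf he))
  rw [hrate.deriv]
  simp only [Pi.mul_apply, Pi.pow_apply, zOf_exp_one_inv, expNegSlope_zero,
    deriv_expNegSlope_zero, neg_zero, exp_zero]
  field_simp
  norm_num

end Rates

lemma isExtinctionRate_XFluid : IsExtinctionRate XFluid XRate :=
  ⟨fun _ hβ => hasDerivAt_XFluid hβ.ne', fun _ => analyticAt_XRate⟩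

lemma isExtinctionRate_VFluid : IsExtinctionRate VFluid VRate :=
  ⟨fun _ hβ => hasDerivAt_VFluid hβ.ne', fun _ => analyticAt_VRate⟩

lemma isExtinctionRate_SFluid : IsExtinctionRate SFluid SRate :=
  ⟨fun _ hβ => hasDerivAt_SFluid hβ.ne', fun _ => analyticAt_SRate⟩

/-- For `ε > 0` let `B ε` be the unique `β > e⁻¹` with
`1 - β - (1/(2e)) (log β)² = 1 - 3/(2e) - ε`. Then there is `ε₀ > 0` such that the
maps `ε ↦ 𝒳(B ε)`, `ε ↦ 𝒱(B ε)`, `ε ↦ 𝒮(B ε)` are twice differentiable on `(0, ε₀)`,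
the second derivative of `ε ↦ 𝒳(B ε)` is `O(1)` as `ε → 0⁺`, and the second
derivatives of `ε ↦ 𝒱(B ε)` and `ε ↦ 𝒮(B ε)` are `O(ε^{-1/2})` as `ε → 0⁺`. -/
theorem karpSipser_fluid_second_derivative_bounds (B : ℝ → ℝ)
    (hB : ∀ ε : ℝ, 0 < ε →
      (Real.exp 1)⁻¹ < B ε ∧
        1 - B ε - 1 / (2 * Real.exp 1) * (Real.log (B ε)) ^ 2
          = 1 - 3 / (2 * Real.exp 1) - ε) :
    ∃ ε₀ : ℝ, 0 < ε₀ ∧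
      (∀ ε ∈ Set.Ioo (0 : ℝ) ε₀,
        (DifferentiableAt ℝ (fun u : ℝ => XFluid (B u)) ε ∧
          DifferentiableAt ℝ (deriv fun u : ℝ => XFluid (B u)) ε) ∧
        (DifferentiableAt ℝ (fun u : ℝ => VFluid (B u)) ε ∧
          DifferentiableAt ℝ (deriv fun u : ℝ => VFluid (B u)) ε) ∧
        (DifferentiableAt ℝ (fun u : ℝ => SFluid (B u)) ε ∧
          DifferentiableAt ℝ (deriv fun u : ℝ => SFluid (B u)) ε)) ∧
      (deriv (deriv fun u : ℝ => XFluid (B u)))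
        =O[𝓝[>] (0 : ℝ)] (fun _ : ℝ => (1 : ℝ)) ∧
      (deriv (deriv fun u : ℝ => VFluid (B u)))
        =O[𝓝[>] (0 : ℝ)] (fun ε : ℝ => (Real.sqrt ε)⁻¹) ∧
      (deriv (deriv fun u : ℝ => SFluid (B u)))
        =O[𝓝[>] (0 : ℝ)] (fun ε : ℝ => (Real.sqrt ε)⁻¹) := by
  have hinv := isInverseBranchAbove_extinctionTime hB
  refine ⟨1, one_pos, fun ε hε => ⟨?_, ?_, ?_⟩, ?_, ?_, ?_⟩
  · exact isExtinctionRate_XFluid.differentiableAt_comp_and_deriv hinv hε.1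
  · exact isExtinctionRate_VFluid.differentiableAt_comp_and_deriv hinv hε.1
  · exact isExtinctionRate_SFluid.differentiableAt_comp_and_deriv hinv hε.1
  · exact isExtinctionRate_XFluid.isBigO_deriv_deriv_comp_one hinv deriv_XRate_exp_one_inv
  · exact isExtinctionRate_VFluid.isBigO_deriv_deriv_comp_inv_sqrt hinv
  · exact isExtinctionRate_SFluid.isBigO_deriv_deriv_comp_inv_sqrt hinv
end
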